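/- arXiv:1310.2754 — 3 statements merged into one kernel-verified Lean document; each statement's English description precedes it below -/
import Mathlib

section
/- There exist constants C₁, C₂ > 0 such that C₁ n^{−1/θ} ≤ a_n ≤ C₂ n^{−1/θ} for all n ≥ 1. -/
/-! In the coordinate `u = x ^ (-θ)` the map `x ↦ x (1 + x ^ θ)` is nearly a translation: with
`s = x ^ θ` it lowers `u` by exactly `(1 - (1 + s) ^ (-θ)) / s`. This is minus the slope of the
convex function `t ↦ t ^ (-θ)` between `1` and `1 + s`, so it decreases in `s`, and by Bernoulli it
is at most `θ`. Along the sequence `s` is at most `a 0 ^ θ`, so `a n ^ (-θ)` grows linearly in `n`.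
-/

open Set

theorem convexOn_rpow_of_nonpos {p : ℝ} (hp : p ≤ 0) :
    ConvexOn ℝ (Ioi 0) fun x : ℝ ↦ x ^ p := by
  have hlog : ConvexOn ℝ (Ioi 0) fun x : ℝ ↦ p * Real.log x := by
    simpa only [Pi.neg_apply, smul_eq_mul, neg_mul_neg] using
      (strictConcaveOn_log_Ioi.concaveOn.neg.smul (neg_nonneg.2 hp))
  refine ⟨convex_Ioi 0, fun x hx y hy α β hα hβ hαβ ↦ ?_⟩
  have hxy : α • x + β • y ∈ Ioi 0 := convex_Ioi 0 hx hy hα hβ hαβ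
  rw [mem_Ioi] at hx hy hxy
  simp only [Real.rpow_def_of_pos hxy, Real.rpow_def_of_pos hx, Real.rpow_def_of_pos hy,
    mul_comm _ p]
  calc
    Real.exp (p * Real.log (α • x + β • y))
      ≤ Real.exp (α • (p * Real.log x) + β • (p * Real.log y)) :=
        Real.exp_le_exp.2 (hlog.2 hx hy hα hβ hαβ)
    _ ≤ α • Real.exp (p * Real.log x) + β • Real.exp (p * Real.log y) :=
        convexOn_exp.2 (mem_univ _) (mem_univ _) hα hβ hαβ

theorem one_add_mul_self_le_rpow_one_add_of_nonpos {s p : ℝ} (hs : -1 < s) (hp : p ≤ 0) :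
    1 + p * s ≤ (1 + s) ^ p := by
  have hs' : 0 < 1 + s := by linarith
  have hlog : Real.log (1 + s) ≤ s := by linarith [Real.log_le_sub_one_of_pos hs']
  calc
    1 + p * s ≤ Real.log (1 + s) * p + 1 := by
      linarith [mul_le_mul_of_nonpos_left hlog hp]
    _ ≤ Real.exp (Real.log (1 + s) * p) := Real.add_one_le_exp _
    _ = (1 + s) ^ p := (Real.rpow_def_of_pos hs' p).symm

theorem antitoneOn_one_sub_rpow_one_add_div_self {p : ℝ} (hp : p ≤ 0) :
    AntitoneOn (fun s : ℝ ↦ (1 - (1 + s) ^ p) / s) (Ioi 0) := by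
  intro s hs t ht hst
  rw [mem_Ioi] at hs ht
  have hsecant := (convexOn_rpow_of_nonpos hp).secant_mono (a := 1) (x := 1 + s) (y := 1 + t)
    (mem_Ioi.2 one_pos) (mem_Ioi.2 (by linarith)) (mem_Ioi.2 (by linarith)) (by linarith)
    (by linarith) (by linarith)
  simp only [Real.one_rpow, add_sub_cancel_left] at hsecant
  simpa only [← neg_div, neg_sub] using neg_le_neg hsecant

theorem add_nsmul_le_of_add_le_succ {M : Type*} [AddMonoid M] [Preorder M] [AddRightMono M]
    {u : ℕ → M} {d : M} (h : ∀ n, u n + d ≤ u (n + 1)) (n : ℕ) : u 0 + n • d ≤ u n := by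
  induction n with
  | zero => simp
  | succ n ih =>
    calc
      u 0 + (n + 1) • d = u 0 + n • d + d := by rw [succ_nsmul, add_assoc]
      _ ≤ u n + d := by gcongr
      _ ≤ u (n + 1) := h n

theorem le_add_nsmul_of_succ_le_add {M : Type*} [AddMonoid M] [Preorder M] [AddRightMono M]
    {u : ℕ → M} {d : M} (h : ∀ n, u (n + 1) ≤ u n + d) (n : ℕ) : u n ≤ u 0 + n • d :=
  add_nsmul_le_of_add_le_succ (M := Mᵒᵈ) h n

section Map

variable {θ x : ℝ}

theorem rpow_neg_sub_mul_one_add_rpow_neg (hx : 0 < x) :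
    x ^ (-θ) - (x * (1 + x ^ θ)) ^ (-θ) = (1 - (1 + x ^ θ) ^ (-θ)) / x ^ θ := by
  rw [Real.mul_rpow hx.le (by positivity), Real.rpow_neg hx.le]
  ring

theorem rpow_neg_sub_mul_one_add_rpow_neg_le (hθ : 0 ≤ θ) (hx : 0 < x) :
    x ^ (-θ) - (x * (1 + x ^ θ)) ^ (-θ) ≤ θ := by
  have hs : 0 < x ^ θ := Real.rpow_pos_of_pos hx θ
  rw [rpow_neg_sub_mul_one_add_rpow_neg hx, div_le_iff₀ hs]
  linarith [one_add_mul_self_le_rpow_one_add_of_nonpos (neg_one_lt_zero.trans hs)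
    (neg_nonpos.2 hθ)]

theorem le_rpow_neg_sub_mul_one_add_rpow_neg {y : ℝ} (hθ : 0 ≤ θ) (hx : 0 < x) (hxy : x ≤ y) :
    (1 - (1 + y ^ θ) ^ (-θ)) / y ^ θ ≤ x ^ (-θ) - (x * (1 + x ^ θ)) ^ (-θ) := by
  rw [rpow_neg_sub_mul_one_add_rpow_neg hx]
  exact antitoneOn_one_sub_rpow_one_add_div_self (neg_nonpos.2 hθ)
    (Real.rpow_pos_of_pos hx θ) (Real.rpow_pos_of_pos (hx.trans_le hxy) θ)
    (Real.rpow_le_rpow hx.le hxy hθ)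

end Map

section BackwardOrbit

variable {θ : ℝ} {a : ℕ → ℝ}

theorem antitone_of_mul_one_add_rpow_eq (hpos : ∀ n, 0 < a n)
    (hrec : ∀ n, a (n + 1) * (1 + a (n + 1) ^ θ) = a n) : Antitone a := by
  refine antitone_nat_of_succ_le fun n ↦ ?_
  rw [← hrec n]
  exact le_mul_of_one_le_right (hpos _).le
    (le_add_of_nonneg_right (Real.rpow_nonneg (hpos _).le θ))

theorem rpow_neg_le_of_mul_one_add_rpow_eq (hθ : 0 ≤ θ) (hpos : ∀ n, 0 < a n)
    (hrec : ∀ n, a (n + 1) * (1 + a (n + 1) ^ θ) = a n) (n : ℕ) :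
    a n ^ (-θ) ≤ a 0 ^ (-θ) + n * θ := by
  rw [← nsmul_eq_mul]
  refine le_add_nsmul_of_succ_le_add (u := fun k ↦ a k ^ (-θ)) (fun k ↦ ?_) n
  have hstep := rpow_neg_sub_mul_one_add_rpow_neg_le hθ (hpos (k + 1))
  rw [hrec k] at hstep
  linarith

theorem le_rpow_neg_of_mul_one_add_rpow_eq (hθ : 0 ≤ θ) (hpos : ∀ n, 0 < a n)
    (hrec : ∀ n, a (n + 1) * (1 + a (n + 1) ^ θ) = a n) (n : ℕ) :
    a 0 ^ (-θ) + n * ((1 - (1 + a 0 ^ θ) ^ (-θ)) / a 0 ^ θ) ≤ a n ^ (-θ) := by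
  rw [← nsmul_eq_mul]
  refine add_nsmul_le_of_add_le_succ (u := fun k ↦ a k ^ (-θ)) (fun k ↦ ?_) n
  have hstep := le_rpow_neg_sub_mul_one_add_rpow_neg hθ (hpos (k + 1))
    (antitone_of_mul_one_add_rpow_eq hpos hrec k.succ.zero_le)
  rw [hrec k] at hstep
  linarith

theorem intermittent_sequence_asymptotics_general (hθ : 0 < θ) (hpos : ∀ n, 0 < a n)
    (hrec : ∀ n, a (n + 1) * (1 + a (n + 1) ^ θ) = a n) :
    ∃ C₁ C₂ : ℝ, 0 < C₁ ∧ 0 < C₂ ∧ ∀ n : ℕ, 1 ≤ n →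
      C₁ * (n : ℝ) ^ (-(1 / θ)) ≤ a n ∧ a n ≤ C₂ * (n : ℝ) ^ (-(1 / θ)) := by
  set c := (1 - (1 + a 0 ^ θ) ^ (-θ)) / a 0 ^ θ
  have hu : 0 < a 0 ^ (-θ) := Real.rpow_pos_of_pos (hpos 0) _
  have hc : 0 < c := by
    have hs : 0 < a 0 ^ θ := Real.rpow_pos_of_pos (hpos 0) θ
    exact div_pos (sub_pos.2 (Real.rpow_lt_one_of_one_lt_of_neg (by linarith) (by linarith))) hs
  have hexp : -(1 / θ) = (-θ)⁻¹ := by rw [one_div, inv_neg]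
  refine ⟨(a 0 ^ (-θ) + θ) ^ (-(1 / θ)), c ^ (-(1 / θ)), by positivity, by positivity,
    fun n hn ↦ ?_⟩
  have hn' : (1 : ℝ) ≤ n := mod_cast hn
  rw [← Real.mul_rpow (by positivity) (by positivity),
    ← Real.mul_rpow (by positivity) (by positivity), hexp,
    Real.rpow_inv_le_iff_of_neg (by positivity) (hpos n) (neg_lt_zero.2 hθ),
    Real.le_rpow_inv_iff_of_neg (hpos n) (by positivity) (neg_lt_zero.2 hθ)]
  constructor
  · calc
      a n ^ (-θ) ≤ a 0 ^ (-θ) + n * θ := rpow_neg_le_of_mul_one_add_rpow_eq hθ.le hpos hrec n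
      _ ≤ a 0 ^ (-θ) * n + n * θ := by gcongr; exact le_mul_of_one_le_right hu.le hn'
      _ = (a 0 ^ (-θ) + θ) * n := by ring
  · calc
      c * n ≤ a 0 ^ (-θ) + n * c := by linarith
      _ ≤ a n ^ (-θ) := le_rpow_neg_of_mul_one_add_rpow_eq hθ.le hpos hrec n

end BackwardOrbit

/-- Let `0 < θ < 1`, let `φ(a) = a(1 + a^θ)` and let `(a_n)` be defined by
`a₀ ∈ (0,1)` and `a_{n+1} ∈ (0, a_n)` with `φ(a_{n+1}) = a_n`. Then there are constants
`C₁, C₂ > 0` such that `C₁ n^{-1/θ} ≤ a_n ≤ C₂ n^{-1/θ}` for all `n ≥ 1`. -/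
theorem intermittent_sequence_asymptotics (θ : ℝ) (hθ0 : 0 < θ) (hθ1 : θ < 1)
    (a : ℕ → ℝ) (ha0 : a 0 ∈ Set.Ioo (0 : ℝ) 1)
    (hrec : ∀ n : ℕ, a (n + 1) ∈ Set.Ioo 0 (a n) ∧
      a (n + 1) * (1 + a (n + 1) ^ θ) = a n) :
    ∃ C₁ C₂ : ℝ, 0 < C₁ ∧ 0 < C₂ ∧ ∀ n : ℕ, 1 ≤ n →
      C₁ * (n : ℝ) ^ (-(1 / θ)) ≤ a n ∧ a n ≤ C₂ * (n : ℝ) ^ (-(1 / θ)) :=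
  intermittent_sequence_asymptotics_general hθ0
    (Nat.rec ha0.1 fun n _ ↦ (hrec n).1.1) fun n ↦ (hrec n).2
end

section
/- There exists a constant C > 0 such that for all n ≥ 1 and all x ∈ [a_{n+1}, a_n], the derivative of the n-th iterate of φ satisfies |(φⁿ)'(x)| ≥ C n^{1/θ + 1}. -/
/-!
The iterates of the convex increasing map `φ` are convex, so on `[a_{n+1}, ∞)` the derivative of
`φⁿ` is at least the slope of `φⁿ` over `[a_{n+2}, a_{n+1}]`. Since `φⁿ` maps this interval onto
`[a_2, a_1]` and `a_k - a_{k+1} = a_{k+1}^{1+θ}`, that slope is `(a_2 / a_{n+2})^{1+θ}`.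
Finally `a_n^{-θ}` grows at least linearly in `n`, because `x ↦ x^{-θ}` turns the step
`a_n - a_{n+1} = a_{n+1}^{1+θ}` into an increment bounded away from `0`.
-/

open Function Set

theorem iterate_backward_orbit {α : Type*} {f : α → α} {a : ℕ → α}
    (ha : ∀ n, f (a (n + 1)) = a n) (n k : ℕ) : f^[n] (a (n + k)) = a k := by
  induction n with
  | zero => rw [zero_add, iterate_zero_apply]
  | succ n ih => rw [iterate_succ_apply, add_right_comm, ha, ih]

theorem convexOn_iterate {𝕜 E : Type*} [Semiring 𝕜] [PartialOrder 𝕜] [AddCommMonoid E]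
    [PartialOrder E] [Module 𝕜 E] {s : Set E} {f : E → E} (hf : ConvexOn 𝕜 s f)
    (hmono : MonotoneOn f s) (hmaps : MapsTo f s s) (n : ℕ) : ConvexOn 𝕜 s f^[n] := by
  induction n with
  | zero => exact convexOn_id hf.1
  | succ n ih =>
    refine ⟨hf.1, fun x hx y hy p q hp hq hpq => ?_⟩
    have hxn := hmaps.iterate n hx
    have hyn := hmaps.iterate n hy
    simp only [iterate_succ_apply']
    calc f (f^[n] (p • x + q • y))
        ≤ f (p • f^[n] x + q • f^[n] y) :=
          hmono (hmaps.iterate n (hf.1 hx hy hp hq hpq)) (hf.1 hxn hyn hp hq hpq)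
            (ih.2 hx hy hp hq hpq)
      _ ≤ p • f (f^[n] x) + q • f (f^[n] y) := hf.2 hxn hyn hp hq hpq

theorem slope_backward_orbit_le_deriv_iterate {s : Set ℝ} (hs : IsOpen s) {f : ℝ → ℝ}
    (hconv : ConvexOn ℝ s f) (hmono : MonotoneOn f s) (hmaps : MapsTo f s s)
    (hdiff : DifferentiableOn ℝ f s) {a : ℕ → ℝ} (hmem : ∀ n, a n ∈ s)
    (horbit : ∀ n, f (a (n + 1)) = a n) (hanti : StrictAnti a) (n k : ℕ) {x : ℝ} (hx : x ∈ s)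
    (hle : a (n + k) ≤ x) :
    (a k - a (k + 1)) / (a (n + k) - a (n + k + 1)) ≤ deriv f^[n] x := by
  have hconv_n : ConvexOn ℝ s f^[n] := convexOn_iterate hconv hmono hmaps n
  have hlt : a (n + k + 1) < a (n + k) := hanti (Nat.lt_succ_self _)
  calc (a k - a (k + 1)) / (a (n + k) - a (n + k + 1))
      = (f^[n] (a (n + k)) - f^[n] (a (n + k + 1))) / (a (n + k) - a (n + k + 1)) := by
        rw [iterate_backward_orbit horbit n k, add_assoc,
          iterate_backward_orbit horbit n (k + 1)]
    _ ≤ (f^[n] x - f^[n] (a (n + k + 1))) / (x - a (n + k + 1)) :=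
        hconv_n.secant_mono (hmem _) (hmem _) hx hlt.ne' (hlt.trans_le hle).ne' hle
    _ = slope f^[n] (a (n + k + 1)) x := (slope_def_field _ _ _).symm
    _ ≤ deriv f^[n] x :=
        hconv_n.slope_le_deriv (hmem _) hx (hlt.trans_le hle)
          ((hdiff.iterate hmaps n).differentiableAt (hs.mem_nhds hx))

theorem one_add_mul_one_sub_inv_le_rpow {r p : ℝ} (hr : 0 < r) (hp : 0 ≤ p) :
    1 + p * (1 - r⁻¹) ≤ r ^ p :=
  calc 1 + p * (1 - r⁻¹) ≤ 1 + p * Real.log r := by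
        gcongr
        exact Real.one_sub_inv_le_log_of_pos hr
    _ ≤ Real.exp (Real.log r * p) := by linarith [Real.add_one_le_exp (Real.log r * p)]
    _ = r ^ p := (Real.rpow_def_of_pos hr p).symm

/-- The map `φ` of the theorem: the expanding branch of a Pomeau–Manneville intermittent map at
its indifferent fixed point `0`. It is defined on all of `ℝ`, but only its values at `x > 0`, where
the real power has its usual meaning, are of interest. -/
noncomputable def intermittentMap (θ x : ℝ) : ℝ := x * (1 + x ^ θ)

section IntermittentMap

variable {θ x : ℝ}

theorem intermittentMap_eq_add_rpow (hx : 0 < x) : intermittentMap θ x = x + x ^ (θ + 1) := by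
  rw [intermittentMap, Real.rpow_add_one hx.ne', mul_one_add, mul_comm x]

theorem lt_intermittentMap (hx : 0 < x) : x < intermittentMap θ x := by
  rw [intermittentMap_eq_add_rpow hx]
  exact lt_add_of_pos_right x (Real.rpow_pos_of_pos hx _)

theorem mapsTo_intermittentMap : MapsTo (intermittentMap θ) (Ioi 0) (Ioi 0) :=
  fun _ hx => lt_trans hx (lt_intermittentMap hx)

theorem monotoneOn_intermittentMap (hθ : -1 ≤ θ) : MonotoneOn (intermittentMap θ) (Ioi 0) := by
  intro x hx y hy hxy
  rw [intermittentMap_eq_add_rpow hx, intermittentMap_eq_add_rpow hy]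
  exact add_le_add hxy (Real.rpow_le_rpow (le_of_lt hx) hxy (neg_le_iff_add_nonneg.1 hθ))

theorem convexOn_intermittentMap (hθ : 0 ≤ θ) : ConvexOn ℝ (Ioi 0) (intermittentMap θ) :=
  ((convexOn_id (convex_Ioi 0)).add
    ((convexOn_rpow (le_add_of_nonneg_left hθ)).subset Ioi_subset_Ici_self (convex_Ioi 0))).congr
    fun _ hx => (intermittentMap_eq_add_rpow hx).symm

theorem differentiableOn_intermittentMap : DifferentiableOn ℝ (intermittentMap θ) (Ioi 0) :=
  differentiableOn_id.mul
    (((Real.differentiableOn_rpow_const θ).mono fun _ hx => ne_of_gt hx).const_add 1)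

theorem mul_rpow_neg_le_rpow_neg_sub_rpow_neg_intermittentMap (hθ : 0 ≤ θ) (hx : 0 < x) :
    θ * (1 + x ^ θ) ^ (-(θ + 1)) ≤ x ^ (-θ) - intermittentMap θ x ^ (-θ) := by
  have ht : 0 < x ^ θ := Real.rpow_pos_of_pos hx θ
  have hr : 0 < 1 + x ^ θ := by positivity
  have hy : intermittentMap θ x ^ (-θ) = (x ^ θ)⁻¹ * ((1 + x ^ θ) ^ θ)⁻¹ := by
    rw [intermittentMap, Real.rpow_neg (by positivity), Real.mul_rpow hx.le hr.le, mul_inv]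
  rw [hy, Real.rpow_neg hx.le, Real.rpow_neg hr.le, Real.rpow_add_one hr.ne']
  have hbern := one_add_mul_one_sub_inv_le_rpow hr hθ
  set t := x ^ θ
  set q := (1 + t) ^ θ
  have hq : 0 < q := Real.rpow_pos_of_pos hr θ
  calc θ * (q * (1 + t))⁻¹ = t⁻¹ * q⁻¹ * (θ * (1 - (1 + t)⁻¹)) := by
        field_simp
        ring
    _ ≤ t⁻¹ * q⁻¹ * (q - 1) := by
        gcongr
        linarith
    _ = t⁻¹ - t⁻¹ * q⁻¹ := by field_simp

end IntermittentMap

section BackwardOrbit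

variable {θ : ℝ} {a : ℕ → ℝ}

theorem strictAnti_backward_orbit (hpos : ∀ n, 0 < a n)
    (horbit : ∀ n, intermittentMap θ (a (n + 1)) = a n) : StrictAnti a :=
  strictAnti_nat_of_succ_lt fun n => (lt_intermittentMap (hpos _)).trans_eq (horbit n)

theorem backward_orbit_sub_succ (hpos : ∀ n, 0 < a n)
    (horbit : ∀ n, intermittentMap θ (a (n + 1)) = a n) (n : ℕ) :
    a n - a (n + 1) = a (n + 1) ^ (θ + 1) := by
  rw [← horbit n, intermittentMap_eq_add_rpow (hpos _), add_sub_cancel_left]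

theorem div_rpow_le_deriv_iterate_intermittentMap (hθ : 0 ≤ θ) (hpos : ∀ n, 0 < a n)
    (horbit : ∀ n, intermittentMap θ (a (n + 1)) = a n) (n : ℕ) {x : ℝ} (hx : a (n + 1) ≤ x) :
    (a 2 / a (n + 2)) ^ (θ + 1) ≤ deriv (intermittentMap θ)^[n] x := by
  have hslope : (a 1 - a 2) / (a (n + 1) - a (n + 2)) ≤ deriv (intermittentMap θ)^[n] x :=
    slope_backward_orbit_le_deriv_iterate isOpen_Ioi (convexOn_intermittentMap hθ)
      (monotoneOn_intermittentMap (by linarith)) mapsTo_intermittentMap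
      differentiableOn_intermittentMap hpos horbit (strictAnti_backward_orbit hpos horbit)
      n 1 ((hpos _).trans_le hx) hx
  rwa [backward_orbit_sub_succ hpos horbit 1, backward_orbit_sub_succ hpos horbit (n + 1),
    ← Real.div_rpow (hpos _).le (hpos _).le] at hslope

theorem exists_mul_le_backward_orbit_rpow_neg (hθ : 0 < θ) (hpos : ∀ n, 0 < a n)
    (horbit : ∀ n, intermittentMap θ (a (n + 1)) = a n) :
    ∃ κ : ℝ, 0 < κ ∧ ∀ n : ℕ, κ * n ≤ a n ^ (-θ) := by
  have hbase (n : ℕ) : 0 < 1 + a n ^ θ := add_pos one_pos (Real.rpow_pos_of_pos (hpos n) θ)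
  refine ⟨θ * (1 + a 1 ^ θ) ^ (-(θ + 1)), mul_pos hθ (Real.rpow_pos_of_pos (hbase 1) _), ?_⟩
  intro n
  induction n with
  | zero => simpa using Real.rpow_nonneg (hpos 0).le (-θ)
  | succ n ih =>
    have hle : a (n + 1) ≤ a 1 := (strictAnti_backward_orbit hpos horbit).antitone (by lia)
    have hincrement : θ * (1 + a 1 ^ θ) ^ (-(θ + 1)) ≤ a (n + 1) ^ (-θ) - a n ^ (-θ) :=
      calc θ * (1 + a 1 ^ θ) ^ (-(θ + 1)) ≤ θ * (1 + a (n + 1) ^ θ) ^ (-(θ + 1)) := by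
            gcongr ?_ * ?_
            exact Real.rpow_le_rpow_of_nonpos (hbase _)
              (add_le_add_right (Real.rpow_le_rpow (hpos _).le hle hθ.le) 1) (by linarith)
        _ ≤ a (n + 1) ^ (-θ) - a n ^ (-θ) := by
            simpa only [horbit n] using
              mul_rpow_neg_le_rpow_neg_sub_rpow_neg_intermittentMap hθ.le (hpos (n + 1))
    push_cast
    linarith

end BackwardOrbit

theorem intermittent_iterate_derivative_lower_bound_general {θ : ℝ} (hθ : 0 < θ) {a : ℕ → ℝ}
    (hpos : ∀ n, 0 < a n) (horbit : ∀ n, intermittentMap θ (a (n + 1)) = a n) :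
    ∃ C : ℝ, 0 < C ∧ ∀ (n : ℕ) (x : ℝ), a (n + 1) ≤ x →
      C * (n : ℝ) ^ (1 / θ + 1) ≤ deriv (intermittentMap θ)^[n] x := by
  obtain ⟨κ, hκ, hgrowth⟩ := exists_mul_le_backward_orbit_rpow_neg hθ hpos horbit
  have ha₂ := hpos 2
  refine ⟨a 2 ^ (θ + 1) * κ ^ (1 / θ + 1), by positivity, fun n x hx => ?_⟩
  have han := hpos (n + 2)
  have hexp : -θ * (1 / θ + 1) = -(θ + 1) := by
    field_simp
    ring
  calc a 2 ^ (θ + 1) * κ ^ (1 / θ + 1) * (n : ℝ) ^ (1 / θ + 1)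
      = a 2 ^ (θ + 1) * (κ * n) ^ (1 / θ + 1) := by
        rw [Real.mul_rpow hκ.le n.cast_nonneg, mul_assoc]
    _ ≤ a 2 ^ (θ + 1) * (a (n + 2) ^ (-θ)) ^ (1 / θ + 1) := by
        gcongr
        refine le_trans ?_ (hgrowth (n + 2))
        gcongr
        lia
    _ = (a 2 / a (n + 2)) ^ (θ + 1) := by
        rw [← Real.rpow_mul han.le, hexp, Real.rpow_neg han.le, Real.div_rpow ha₂.le han.le,
          div_eq_mul_inv]
    _ ≤ deriv (intermittentMap θ)^[n] x :=
        div_rpow_le_deriv_iterate_intermittentMap hθ.le hpos horbit n hx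

/-- Let `0 < θ < 1`, let `φ(a) = a(1 + a^θ)` and let `(a_n)` be defined by
`a₀ ∈ (0,1)` and `a_{n+1} ∈ (0, a_n)` with `φ(a_{n+1}) = a_n`. Then there is a constant
`C > 0` such that for all `n ≥ 1` and all `x ∈ [a_{n+1}, a_n]`, the derivative of the `n`-th
iterate of `φ` satisfies `|(φⁿ)'(x)| ≥ C n^{1/θ + 1}`. -/
theorem intermittent_iterate_derivative_lower_bound (θ : ℝ) (hθ0 : 0 < θ) (hθ1 : θ < 1)
    (a : ℕ → ℝ) (ha0 : a 0 ∈ Set.Ioo (0 : ℝ) 1)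
    (hrec : ∀ n : ℕ, a (n + 1) ∈ Set.Ioo 0 (a n) ∧
      a (n + 1) * (1 + a (n + 1) ^ θ) = a n) :
    ∃ C : ℝ, 0 < C ∧ ∀ n : ℕ, 1 ≤ n → ∀ x ∈ Set.Icc (a (n + 1)) (a n),
      C * (n : ℝ) ^ (1 / θ + 1) ≤
        |deriv ((fun y : ℝ => y * (1 + y ^ θ))^[n]) x| := by
  have hpos : ∀ n, 0 < a n := fun n => (hrec n).1.1.trans (hrec n).1.2
  obtain ⟨C, hC, hbound⟩ :=
    intermittent_iterate_derivative_lower_bound_general hθ0 hpos (fun n => (hrec n).2)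
  exact ⟨C, hC, fun n _ x hx => (hbound n x hx.1).trans (le_abs_self _)⟩
end

section
/- Let (Ω, ℱ, P) be a probability space, (𝒢_i)_{i≥1} a filtration of sub-σ-algebras of ℱ, p ≥ 1 a real number, and X₁, …, X_n centered random variables in L^{2p}(P) with each X_i measurable with respect to 𝒢_i. For 1 ≤ i ≤ n set b_{i,n} = max_{i ≤ k ≤ n} ‖ X_i · Σ_{j=i}^{k} E(X_j | 𝒢_i) ‖_{L^p}. Then E|X₁ + ⋯ + X_n|^{2p} ≤ ( 4p · Σ_{i=1}^n b_{i,n} )^p. -/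
open MeasureTheory

/-!
Write `S_m = X_1 + ⋯ + X_m` and interpolate between `S_{m-1}` and `S_m` by `S_{m-1} + t X_m`.
Convexity of `|x|^{2p}` and summation by parts bound `|S_{m-1} + t X_m|^{2p}` by a sum of increments
of the derivative of `|x|^{2p}`, from `S_{j-1}` to `S_j`, each multiplied by the remaining sum from
`j` on. Such an increment is `𝒢_j`-measurable, so the remaining sum may be replaced by its
conditional expectation given `𝒢_j`; writing the increment as an integral along the segment from
`S_{j-1}` to `S_j` and applying Hölder's inequality gives, for
`φ_j(u) = E|S_{j-1} + u X_j|^{2p}` and `c = 2p(2p - 1)`,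
`φ_m(t) ≤ c ∑_{j<m} b_j ∫₀¹ φ_j^{1-1/p} + c b_m ∫₀ᵗ φ_m^{1-1/p}`.
By nonlinear Gronwall comparison, the `1/p`-th power of the right-hand side increases by at most
`2(2p - 1) b_m` between `t = 0` and `t = 1`, and its value at `t = 1` is the value at `t = 0` of
the corresponding bound for `m + 1`.
-/

/-- The odd power `sign x * |x| ^ (s + 1)`, written so that its derivative is `(s + 1) * |x| ^ s`
and the derivative of `|x| ^ (s + 2)` is `(s + 2) * signedPow s x`. -/
noncomputable def signedPow (s x : ℝ) : ℝ :=
  |x| ^ s * x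

namespace signedPow

variable {s : ℝ}

lemma continuous (hs : 0 ≤ s) : Continuous (signedPow s) :=
  (continuous_abs.rpow_const fun _ ↦ Or.inr hs).mul continuous_id

lemma apply_zero (s : ℝ) : signedPow s 0 = 0 :=
  mul_zero _

lemma hasDerivAt (hs : 0 ≤ s) (x : ℝ) : HasDerivAt (signedPow s) ((s + 1) * |x| ^ s) x := by
  refine hasDerivAt_of_hasDerivAt_of_ne' (x := 0) (fun y hy ↦ ?_) (continuous hs).continuousAt
    (continuous_const.mul (continuous_abs.rpow_const fun _ ↦ Or.inr hs)).continuousAt x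
  have hpow : HasDerivAt (fun y ↦ |y| ^ s) (SignType.sign y * s * |y| ^ (s - 1)) y :=
    (hasDerivAt_abs hy).rpow_const (Or.inl (abs_ne_zero.2 hy))
  refine (hpow.mul (hasDerivAt_id' y)).congr_deriv ?_
  have hsplit : |y| ^ s = |y| ^ (s - 1) * (SignType.sign y * y) := by
    rw [sign_mul_self, ← Real.rpow_add_one (abs_ne_zero.2 hy), sub_add_cancel]
  simp only [Pi.mul_apply, hsplit]
  ring

end signedPow

lemma hasDerivAt_abs_rpow_add_two {s : ℝ} (hs : 0 ≤ s) (x : ℝ) :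
    HasDerivAt (fun x ↦ |x| ^ (s + 2)) ((s + 2) * signedPow s x) x :=
  (hasDerivAt_abs_rpow x (by linarith)).congr_deriv <| by
    rw [signedPow, add_sub_cancel_right, mul_assoc]

lemma convexOn_abs_rpow {q : ℝ} (hq : 1 ≤ q) : ConvexOn ℝ Set.univ fun x : ℝ ↦ |x| ^ q := by
  have himage : norm '' (Set.univ : Set ℝ) ⊆ Set.Ici 0 :=
    Set.image_subset_iff.2 fun x _ ↦ norm_nonneg x
  have hconvex : Convex ℝ (norm '' (Set.univ : Set ℝ)) :=
    (isPreconnected_univ.image _ continuous_norm.continuousOn).ordConnected.convex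
  exact ((convexOn_rpow hq).subset himage hconvex).comp convexOn_univ_norm
    ((Real.monotoneOn_rpow_Ici_of_exponent_nonneg (by linarith)).mono himage)

lemma abs_rpow_sub_abs_rpow_le {s : ℝ} (hs : 0 ≤ s) (a b : ℝ) :
    |b| ^ (s + 2) - |a| ^ (s + 2) ≤ (s + 2) * signedPow s b * (b - a) := by
  have hconvex := convexOn_abs_rpow (q := s + 2) (by linarith)
  have hderiv := hasDerivAt_abs_rpow_add_two hs b
  rcases lt_trichotomy a b with hab | rfl | hab
  · have := hconvex.slope_le_of_hasDerivAt trivial trivial hab hderiv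
    rwa [slope_def_field, div_le_iff₀ (sub_pos.2 hab)] at this
  · simp
  · have := hconvex.le_slope_of_hasDerivAt trivial trivial hab hderiv
    rw [slope_def_field, le_div_iff₀ (sub_pos.2 hab)] at this
    linarith

section SummationByParts

open Finset

lemma sum_range_mul_eq_sum_range_sub_mul_sum_Ico {R : Type*} [CommRing R] (f x : ℕ → R)
    (h0 : f 0 = 0) (n : ℕ) :
    ∑ i ∈ range n, f (i + 1) * x i = ∑ j ∈ range n, (f (j + 1) - f j) * ∑ i ∈ Ico j n, x i := by
  simp only [mul_sum, range_eq_Ico]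
  rw [sum_Ico_Ico_comm]
  refine sum_congr rfl fun i _ ↦ ?_
  rw [← sum_mul, ← range_eq_Ico, sum_range_sub, h0, sub_zero]

lemma abs_sum_range_rpow_le {s : ℝ} (hs : 0 ≤ s) (x : ℕ → ℝ) (n : ℕ) :
    |∑ i ∈ range n, x i| ^ (s + 2) ≤ (s + 2) * ∑ j ∈ range n,
      (signedPow s (∑ i ∈ range (j + 1), x i) - signedPow s (∑ i ∈ range j, x i)) *
        ∑ i ∈ Ico j n, x i := by
  calc |∑ i ∈ range n, x i| ^ (s + 2)
      = ∑ j ∈ range n, (|∑ i ∈ range (j + 1), x i| ^ (s + 2) - |∑ i ∈ range j, x i| ^ (s + 2)) := by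
        rw [sum_range_sub (fun j ↦ |∑ i ∈ range j, x i| ^ (s + 2)), sum_range_zero, abs_zero,
          Real.zero_rpow (by linarith), sub_zero]
    _ ≤ ∑ j ∈ range n, (s + 2) * (signedPow s (∑ i ∈ range (j + 1), x i) * x j) := by
        refine sum_le_sum fun j _ ↦ (abs_rpow_sub_abs_rpow_le hs _ _).trans_eq ?_
        rw [sum_range_succ_sub_sum, mul_assoc]
    _ = _ := by
        rw [← mul_sum, sum_range_mul_eq_sum_range_sub_mul_sum_Ico
          (fun j ↦ signedPow s (∑ i ∈ range j, x i)) x (signedPow.apply_zero s)]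

lemma abs_sum_range_add_rpow_le {s : ℝ} (hs : 0 ≤ s) (x : ℕ → ℝ) (n : ℕ) (z : ℝ) :
    |∑ i ∈ range n, x i + z| ^ (s + 2) ≤ (s + 2) * (∑ j ∈ range n,
      (signedPow s (∑ i ∈ range j, x i + x j) - signedPow s (∑ i ∈ range j, x i)) *
        (∑ i ∈ Ico j n, x i + z) +
      (signedPow s (∑ i ∈ range n, x i + z) - signedPow s (∑ i ∈ range n, x i)) * z) := by
  have hsum := abs_sum_range_rpow_le hs x n
  have hstep := abs_rpow_sub_abs_rpow_le hs (∑ i ∈ range n, x i) (∑ i ∈ range n, x i + z)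
  have htelescope := sum_range_sub (fun j ↦ signedPow s (∑ i ∈ range j, x i)) n
  rw [sum_range_zero, signedPow.apply_zero, sub_zero] at htelescope
  simp only [← sum_range_succ, mul_add, sum_add_distrib, ← sum_mul, htelescope]
  linarith

end SummationByParts

section Gronwall

open intervalIntegral Set

lemma rpow_one_sub_le_of_le_integral_rpow_of_pos {g : ℝ → ℝ} (hg : Continuous g)
    (hg0 : ∀ t, 0 ≤ g t) {C K T θ : ℝ} (hC : 0 < C) (hK : 0 ≤ K) (hT : 0 ≤ T) (hθ : θ ≤ 1)
    (hle : ∀ t ∈ Icc 0 T, g t ≤ (C + K * ∫ u in 0..t, g u) ^ θ) :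
    (C + K * ∫ u in 0..T, g u) ^ (1 - θ) ≤ C ^ (1 - θ) + (1 - θ) * K * T := by
  set H : ℝ → ℝ := fun t ↦ C + K * ∫ u in 0..t, g u
  have hHpos : ∀ t ∈ Icc 0 T, 0 < H t := fun t ht ↦
    add_pos_of_pos_of_nonneg hC (mul_nonneg hK (integral_nonneg ht.1 fun u _ ↦ hg0 u))
  have hderiv : ∀ t ∈ Icc 0 T,
      HasDerivAt (fun t ↦ H t ^ (1 - θ)) (K * g t * (1 - θ) * H t ^ (1 - θ - 1)) t := fun t ht ↦
    (((hg.integral_hasStrictDerivAt 0 t).hasDerivAt.const_mul K).const_add C).rpow_const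
      (Or.inl (hHpos t ht).ne')
  have hderiv_le : ∀ t ∈ Icc 0 T, K * g t * (1 - θ) * H t ^ (1 - θ - 1) ≤ (1 - θ) * K := by
    intro t ht
    have hH := hHpos t ht
    calc K * g t * (1 - θ) * H t ^ (1 - θ - 1)
        ≤ K * H t ^ θ * (1 - θ) * H t ^ (1 - θ - 1) := by
          gcongr
          exact hle t ht
      _ = (1 - θ) * K * H t ^ (θ + (1 - θ - 1)) := by rw [Real.rpow_add hH]; ring
      _ = (1 - θ) * K := by ring_nf; simp
  have hgrowth := (convex_Icc 0 T).image_sub_le_mul_sub_of_deriv_le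
    (fun t ht ↦ (hderiv t ht).continuousAt.continuousWithinAt)
    (fun t ht ↦ (hderiv t (interior_subset ht)).differentiableAt.differentiableWithinAt)
    (fun t ht ↦ (hderiv t (interior_subset ht)).deriv.trans_le (hderiv_le t (interior_subset ht)))
    0 (left_mem_Icc.2 hT) T (right_mem_Icc.2 hT) hT
  have hH0 : H 0 = C := by simp [H]
  rw [hH0] at hgrowth
  linarith

lemma rpow_one_sub_le_of_le_integral_rpow {g : ℝ → ℝ} (hg : Continuous g) (hg0 : ∀ t, 0 ≤ g t)
    {C K T θ : ℝ} (hC : 0 ≤ C) (hK : 0 ≤ K) (hT : 0 ≤ T) (hθ0 : 0 ≤ θ) (hθ : θ ≤ 1)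
    (hle : ∀ t ∈ Icc 0 T, g t ≤ (C + K * ∫ u in 0..t, g u) ^ θ) :
    (C + K * ∫ u in 0..T, g u) ^ (1 - θ) ≤ C ^ (1 - θ) + (1 - θ) * K * T := by
  have hperturbed : ∀ ε > 0, (C + ε + K * ∫ u in 0..T, g u) ^ (1 - θ) ≤
      (C + ε) ^ (1 - θ) + (1 - θ) * K * T := by
    refine fun ε hε ↦ rpow_one_sub_le_of_le_integral_rpow_of_pos hg hg0 (by positivity) hK hT hθ
      fun t ht ↦ (hle t ht).trans ?_
    have : 0 ≤ ∫ u in 0..t, g u := integral_nonneg ht.1 fun u _ ↦ hg0 u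
    gcongr
    linarith
  have hcont : ∀ a, Filter.Tendsto (fun ε ↦ (C + ε + a) ^ (1 - θ)) (nhdsWithin 0 (Ioi 0))
      (nhds ((C + a) ^ (1 - θ))) := fun a ↦ by
    have : Continuous fun ε ↦ (C + ε + a) ^ (1 - θ) :=
      (by fun_prop : Continuous fun ε ↦ C + ε + a).rpow_const fun _ ↦ Or.inr (sub_nonneg.2 hθ)
    simpa using (this.tendsto 0).mono_left nhdsWithin_le_nhds
  refine le_of_tendsto_of_tendsto (hcont _) ?_ (eventually_mem_nhdsWithin.mono hperturbed)
  simpa using (hcont 0).add_const ((1 - θ) * K * T)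

end Gronwall

section Holder

variable {α : Type*} {mα : MeasurableSpace α} {μ : Measure α} {p : ℝ} {f g h : α → ℝ}

lemma holderTriple_ofReal_two_mul (hp : 0 < p) :
    (ENNReal.ofReal (2 * p)).HolderTriple (ENNReal.ofReal (2 * p)) (ENNReal.ofReal p) :=
  Real.HolderTriple.ennrealOfReal
    ⟨by field_simp; norm_num, by positivity, by positivity⟩

-- For `p = 1` the first exponent is `2 / 0 = ∞`.
lemma holderConjugate_ofReal_div (hp : 1 ≤ p) :
    (ENNReal.ofReal (2 * p) / ENNReal.ofReal (2 * p - 2)).HolderConjugate (ENNReal.ofReal p) := by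
  have h2p : 0 < 2 * p := by linarith
  rw [ENNReal.holderConjugate_iff, ENNReal.inv_div (Or.inl ENNReal.ofReal_ne_top)
    (Or.inr (by simpa using h2p)), ← ENNReal.ofReal_div_of_pos h2p,
    ← ENNReal.ofReal_inv_of_pos (by linarith),
    ← ENNReal.ofReal_add (div_nonneg (by linarith) h2p.le) (by positivity), ENNReal.ofReal_eq_one]
  field_simp
  ring

lemma memLp_mul_of_two_mul (hp : 0 < p) (hf : MemLp f (ENNReal.ofReal (2 * p)) μ)
    (hg : MemLp g (ENNReal.ofReal (2 * p)) μ) : MemLp (f * g) (ENNReal.ofReal p) μ :=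
  have := holderTriple_ofReal_two_mul hp
  hg.mul hf

lemma integrable_abs_rpow_mul (hp : 1 ≤ p) (hf : MemLp f (ENNReal.ofReal (2 * p)) μ)
    (hg : MemLp g (ENNReal.ofReal p) μ) : Integrable (fun x ↦ |f x| ^ (2 * p - 2) * g x) μ := by
  have := holderConjugate_ofReal_div hp
  have hpow := hf.norm_rpow_div (ENNReal.ofReal (2 * p - 2))
  rw [ENNReal.toReal_ofReal (by linarith)] at hpow
  exact hpow.integrable_mul hg

lemma integrable_signedPow_mul (hp : 1 ≤ p) (hf : MemLp f (ENNReal.ofReal (2 * p)) μ)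
    (hg : MemLp g (ENNReal.ofReal (2 * p)) μ) :
    Integrable (fun x ↦ signedPow (2 * p - 2) (f x) * g x) μ := by
  simpa only [signedPow, mul_assoc, Pi.mul_apply] using
    integrable_abs_rpow_mul hp hf (memLp_mul_of_two_mul (by linarith) hf hg)

lemma integrable_signedPow_add_sub_mul (hp : 1 ≤ p) (hf : MemLp f (ENNReal.ofReal (2 * p)) μ)
    (hg : MemLp g (ENNReal.ofReal (2 * p)) μ) (hh : MemLp h (ENNReal.ofReal (2 * p)) μ) :
    Integrable (fun x ↦ (signedPow (2 * p - 2) (f x + g x) - signedPow (2 * p - 2) (f x)) * h x)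
      μ := by
  simp only [sub_mul]
  exact (integrable_signedPow_mul hp (hf.add hg) hh).sub (integrable_signedPow_mul hp hf hh)

lemma lpNorm_congr_ae {q : ENNReal} (hfg : f =ᵐ[μ] g) : lpNorm f q μ = lpNorm g q μ := by
  by_cases hf : AEStronglyMeasurable f μ
  · rw [← toReal_eLpNorm hf, ← toReal_eLpNorm (hf.congr hfg), eLpNorm_congr_ae hfg]
  · rw [lpNorm_of_not_aestronglyMeasurable hf,
      lpNorm_of_not_aestronglyMeasurable (mt (aestronglyMeasurable_congr hfg).2 hf)]

lemma lpNorm_ofReal_eq (hp : 0 < p) (hf : AEStronglyMeasurable f μ) :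
    lpNorm f (ENNReal.ofReal p) μ = (∫ x, |f x| ^ p ∂μ) ^ (1 / p) := by
  rw [lpNorm_eq_integral_norm_rpow_toReal (by simpa using hp) ENNReal.ofReal_ne_top hf,
    ENNReal.toReal_ofReal hp.le, one_div]
  rfl

lemma lpNorm_ofReal_rpow (hp : 0 < p) (hf : AEStronglyMeasurable f μ) :
    lpNorm f (ENNReal.ofReal p) μ ^ p = ∫ x, |f x| ^ p ∂μ := by
  rw [lpNorm_ofReal_eq hp hf, one_div, Real.rpow_inv_rpow (by positivity) hp.ne']

lemma integral_abs_rpow_mul_abs_le (hp : 1 ≤ p) (hf : MemLp f (ENNReal.ofReal (2 * p)) μ)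
    (hg : MemLp g (ENNReal.ofReal p) μ) :
    ∫ x, |f x| ^ (2 * p - 2) * |g x| ∂μ ≤
      lpNorm f (ENNReal.ofReal (2 * p)) μ ^ (2 * p - 2) * lpNorm g (ENNReal.ofReal p) μ := by
  rcases hp.eq_or_lt with rfl | hp
  · simp [lpNorm_one_eq_integral_norm (by simpa using hg.aestronglyMeasurable)]
  have hs : 0 < 2 * p - 2 := by linarith
  have hconj : (2 * p / (2 * p - 2)).HolderConjugate p := by
    refine ⟨?_, by positivity, by positivity⟩
    field_simp
    ring
  have hpow := hf.norm_rpow_div (ENNReal.ofReal (2 * p - 2))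
  rw [ENNReal.toReal_ofReal hs.le, ← ENNReal.ofReal_div_of_pos hs] at hpow
  calc ∫ x, |f x| ^ (2 * p - 2) * |g x| ∂μ
      ≤ (∫ x, (|f x| ^ (2 * p - 2)) ^ (2 * p / (2 * p - 2)) ∂μ) ^ (1 / (2 * p / (2 * p - 2))) *
          (∫ x, |g x| ^ p ∂μ) ^ (1 / p) :=
        integral_mul_le_Lp_mul_Lq_of_nonneg hconj (.of_forall fun x ↦ by positivity)
          (.of_forall fun x ↦ abs_nonneg _) hpow hg.norm
    _ = _ := by
        have hexp : 1 / (2 * p) * (2 * p - 2) = 1 / (2 * p / (2 * p - 2)) := by field_simp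
        rw [lpNorm_ofReal_eq (by linarith) hf.aestronglyMeasurable,
          lpNorm_ofReal_eq (by linarith) hg.aestronglyMeasurable, ← Real.rpow_mul (by positivity),
          hexp]
        simp only [← Real.rpow_mul (abs_nonneg _), mul_div_cancel₀ _ hs.ne']

end Holder

section SegmentMoment

variable {Ω : Type*} {mΩ : MeasurableSpace Ω} {P : Measure Ω} {p : ℝ} {A Y W T : Ω → ℝ}

/-- The moment `‖A + u Y‖_{2p} ^ (2p - 2)` at the point with parameter `u` of the segment from `A`
to `A + Y`: the Hölder factor in the estimate of increments of `signedPow` along this segment. -/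
noncomputable def segmentMoment (P : Measure Ω) (p : ℝ) (A Y : Ω → ℝ) (u : ℝ) : ℝ :=
  lpNorm (A + u • Y) (ENNReal.ofReal (2 * p)) P ^ (2 * p - 2)

namespace segmentMoment

lemma nonneg (u : ℝ) : 0 ≤ segmentMoment P p A Y u :=
  Real.rpow_nonneg lpNorm_nonneg _

lemma smul_right (t u : ℝ) : segmentMoment P p A (t • Y) u = segmentMoment P p A Y (u * t) := by
  rw [segmentMoment, segmentMoment, smul_smul]

lemma eq_integral_rpow (hp : 1 ≤ p) (hA : AEStronglyMeasurable A P)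
    (hY : AEStronglyMeasurable Y P) (u : ℝ) :
    segmentMoment P p A Y u = (∫ ω, |A ω + u * Y ω| ^ (2 * p) ∂P) ^ (1 - 1 / p) := by
  have hexp : 2 * p - 2 = 2 * p * (1 - 1 / p) := by field_simp
  rw [segmentMoment, hexp, Real.rpow_mul lpNorm_nonneg,
    lpNorm_ofReal_rpow (by linarith) (hA.add (hY.const_smul u))]
  rfl

lemma continuous (hp : 1 ≤ p) (hA : MemLp A (ENNReal.ofReal (2 * p)) P)
    (hY : MemLp Y (ENNReal.ofReal (2 * p)) P) : Continuous (segmentMoment P p A Y) := by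
  have : Fact (1 ≤ ENNReal.ofReal (2 * p)) := ⟨ENNReal.one_le_ofReal.2 (by linarith)⟩
  have hnorm (u : ℝ) : lpNorm (A + u • Y) (ENNReal.ofReal (2 * p)) P =
      ‖hA.toLp A + u • hY.toLp Y‖ := by
    rw [← MemLp.toLp_const_smul, ← MemLp.toLp_add, Lp.norm_toLp,
      toReal_eLpNorm (hA.add (hY.const_smul u)).aestronglyMeasurable]
  unfold segmentMoment
  simp only [hnorm]
  exact Continuous.rpow_const (by fun_prop) fun _ ↦ Or.inr (by linarith)

end segmentMoment

lemma lpNorm_smul_mul_self_mul_integral_segmentMoment_le {q : ENNReal} {t : ℝ}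
    (ht : t ∈ Set.Icc (0 : ℝ) 1) :
    lpNorm ((t • Y) * (t • Y)) q P * ∫ u in (0 : ℝ)..1, segmentMoment P p A (t • Y) u ≤
      lpNorm (Y * Y) q P * ∫ u in (0 : ℝ)..t, segmentMoment P p A Y u := by
  have hscale : t * ∫ u in (0 : ℝ)..1, segmentMoment P p A (t • Y) u =
      ∫ u in (0 : ℝ)..t, segmentMoment P p A Y u := by
    simp only [segmentMoment.smul_right]
    simp
  have hintegral : 0 ≤ ∫ u in (0 : ℝ)..t, segmentMoment P p A Y u :=
    intervalIntegral.integral_nonneg ht.1 fun u _ ↦ segmentMoment.nonneg u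
  rw [smul_mul_smul_comm, lpNorm_const_smul, coe_nnnorm, Real.norm_of_nonneg (mul_self_nonneg t)]
  calc t * t * lpNorm (Y * Y) q P * ∫ u in (0 : ℝ)..1, segmentMoment P p A (t • Y) u
      = t * (lpNorm (Y * Y) q P * ∫ u in (0 : ℝ)..t, segmentMoment P p A Y u) := by
        rw [← hscale]
        ring
    _ ≤ _ := mul_le_of_le_one_left (mul_nonneg lpNorm_nonneg hintegral) ht.2

lemma integrable_prod_abs_add_mul_rpow_mul [SFinite P] (hp : 1 ≤ p)
    (hA : MemLp A (ENNReal.ofReal (2 * p)) P) (hY : MemLp Y (ENNReal.ofReal (2 * p)) P)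
    (hW : MemLp W (ENNReal.ofReal p) P) (a b : ℝ) :
    Integrable (fun z : ℝ × Ω ↦ |A z.2 + z.1 * Y z.2| ^ (2 * p - 2) * W z.2)
      ((volume.restrict (Set.uIoc a b)).prod P) := by
  have hmeas : AEStronglyMeasurable
      (fun z : ℝ × Ω ↦ |A z.2 + z.1 * Y z.2| ^ (2 * p - 2) * W z.2)
      ((volume.restrict (Set.uIoc a b)).prod P) := by
    have hpow : Continuous fun x : ℝ ↦ |x| ^ (2 * p - 2) :=
      continuous_abs.rpow_const fun _ ↦ Or.inr (by linarith)
    exact (hpow.comp_aestronglyMeasurable (hA.1.comp_snd.add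
      (measurable_fst.aestronglyMeasurable.mul hY.1.comp_snd))).mul hW.1.comp_snd
  have hsegment (u : ℝ) : MemLp (fun ω ↦ A ω + u * Y ω) (ENNReal.ofReal (2 * p)) P :=
    hA.add (hY.const_mul u)
  refine (integrable_prod_iff hmeas).2
    ⟨.of_forall fun u ↦ integrable_abs_rpow_mul hp (hsegment u) hW, ?_⟩
  have hbound : Integrable (fun u ↦ segmentMoment P p A Y u * lpNorm W (ENNReal.ofReal p) P)
      (volume.restrict (Set.uIoc a b)) :=
    intervalIntegrable_iff.1
      (((segmentMoment.continuous hp hA hY).mul_const _).intervalIntegrable a b)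
  refine hbound.mono' hmeas.norm.integral_prod_right' (.of_forall fun u ↦ ?_)
  rw [Real.norm_of_nonneg (integral_nonneg fun _ ↦ norm_nonneg _)]
  simpa [segmentMoment, Real.abs_rpow_of_nonneg] using!
    integral_abs_rpow_mul_abs_le hp (hsegment u) hW

lemma signedPow_add_sub_mul_eq_integral {s : ℝ} (hs : 0 ≤ s) (a y c : ℝ) :
    (signedPow s (a + y) - signedPow s a) * c =
      (s + 1) * ∫ u in (0 : ℝ)..1, |a + u * y| ^ s * (y * c) := by
  have hderiv (u : ℝ) : HasDerivAt (fun u ↦ signedPow s (a + u * y))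
      ((s + 1) * |a + u * y| ^ s * y) u :=
    HasDerivAt.comp (h₂ := signedPow s) u (signedPow.hasDerivAt hs _)
      ((hasDerivAt_mul_const y).const_add a)
  have hcont : Continuous fun u ↦ (s + 1) * |a + u * y| ^ s * y :=
    .mul (.mul continuous_const (.rpow_const (by fun_prop) fun _ ↦ Or.inr hs)) continuous_const
  have hftc := intervalIntegral.integral_eq_sub_of_hasDerivAt (fun u _ ↦ hderiv u)
    (hcont.intervalIntegrable 0 1)
  rw [one_mul, zero_mul, add_zero] at hftc
  rw [← hftc, ← intervalIntegral.integral_mul_const, ← intervalIntegral.integral_const_mul]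
  congr 1 with u
  ring

lemma integral_signedPow_add_sub_mul_eq [SFinite P] (hp : 1 ≤ p)
    (hA : MemLp A (ENNReal.ofReal (2 * p)) P) (hY : MemLp Y (ENNReal.ofReal (2 * p)) P)
    (hYT : MemLp (Y * T) (ENNReal.ofReal p) P) :
    ∫ ω, (signedPow (2 * p - 2) (A ω + Y ω) - signedPow (2 * p - 2) (A ω)) * T ω ∂P =
      (2 * p - 1) * ∫ u in (0 : ℝ)..1,
        ∫ ω, |A ω + u * Y ω| ^ (2 * p - 2) * (Y ω * T ω) ∂P := by
  rw [intervalIntegral_integral_swap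
    (f := fun u ω ↦ |A ω + u * Y ω| ^ (2 * p - 2) * (Y ω * T ω))
    (integrable_prod_abs_add_mul_rpow_mul hp hA hY hYT 0 1), ← integral_const_mul]
  congr 1 with ω
  rw [signedPow_add_sub_mul_eq_integral (by linarith)]
  ring

lemma integral_signedPow_add_sub_mul_le [SFinite P] (hp : 1 ≤ p)
    (hA : MemLp A (ENNReal.ofReal (2 * p)) P) (hY : MemLp Y (ENNReal.ofReal (2 * p)) P)
    (hYT : MemLp (Y * T) (ENNReal.ofReal p) P) :
    ∫ ω, (signedPow (2 * p - 2) (A ω + Y ω) - signedPow (2 * p - 2) (A ω)) * T ω ∂P ≤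
      (2 * p - 1) * (lpNorm (Y * T) (ENNReal.ofReal p) P *
        ∫ u in (0 : ℝ)..1, segmentMoment P p A Y u) := by
  have hpoint (u : ℝ) : ∫ ω, |A ω + u * Y ω| ^ (2 * p - 2) * (Y ω * T ω) ∂P ≤
      lpNorm (Y * T) (ENNReal.ofReal p) P * segmentMoment P p A Y u := by
    have hsegment : MemLp (fun ω ↦ A ω + u * Y ω) (ENNReal.ofReal (2 * p)) P :=
      hA.add (hY.const_mul u)
    calc ∫ ω, |A ω + u * Y ω| ^ (2 * p - 2) * (Y ω * T ω) ∂P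
        ≤ ∫ ω, |A ω + u * Y ω| ^ (2 * p - 2) * |Y ω * T ω| ∂P :=
          integral_mono (integrable_abs_rpow_mul hp hsegment hYT)
            (integrable_abs_rpow_mul hp hsegment hYT.norm) fun ω ↦
              mul_le_mul_of_nonneg_left (le_abs_self _) (by positivity)
      _ ≤ _ := (integral_abs_rpow_mul_abs_le hp hsegment hYT).trans_eq (mul_comm _ _)
  have hinner : IntervalIntegrable
      (fun u : ℝ ↦ ∫ ω, |A ω + u * Y ω| ^ (2 * p - 2) * (Y ω * T ω) ∂P) volume 0 1 :=
    intervalIntegrable_iff.2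
      (integrable_prod_abs_add_mul_rpow_mul hp hA hY hYT 0 1).integral_prod_left
  have hmoment := (segmentMoment.continuous hp hA hY).intervalIntegrable (μ := volume) 0 1
  rw [integral_signedPow_add_sub_mul_eq hp hA hY hYT,
    ← intervalIntegral.integral_const_mul (lpNorm _ _ _)]
  exact mul_le_mul_of_nonneg_left
    (intervalIntegral.integral_mono zero_le_one hinner (hmoment.const_mul _) hpoint) (by linarith)

end SegmentMoment

section Filtration

open Finset

variable {Ω : Type*} {mΩ : MeasurableSpace Ω} {P : Measure Ω} {p : ℝ}
  {𝒢 : Filtration ℕ mΩ} {m : ℕ} {X : ℕ → Ω → ℝ} {A Y R : Ω → ℝ}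

/-- The norm `‖X_j E(X_j + ⋯ + X_{k-1} | 𝒢_j)‖_p`; the half-open index range makes `b_{j,n}` the
maximum of `condExpSumNorm P 𝒢 X p j k` over `j < k ≤ n + 1`. -/
noncomputable def condExpSumNorm (P : Measure Ω) (𝒢 : Filtration ℕ mΩ) (X : ℕ → Ω → ℝ) (p : ℝ)
    (j k : ℕ) : ℝ :=
  lpNorm (X j * P[∑ i ∈ Ico j k, X i|𝒢 j]) (ENNReal.ofReal p) P

/-- The integral over `u ∈ [0, t]` of the segment moment from `X_0 + ⋯ + X_{j-1}` to
`X_0 + ⋯ + X_j`. -/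
noncomputable def segmentIntegral (P : Measure Ω) (p : ℝ) (X : ℕ → Ω → ℝ) (j : ℕ) (t : ℝ) : ℝ :=
  ∫ u in (0 : ℝ)..t, segmentMoment P p (∑ i ∈ range j, X i) (X j) u

lemma segmentIntegral_nonneg {j : ℕ} {t : ℝ} (ht : 0 ≤ t) :
    0 ≤ segmentIntegral P p X j t :=
  intervalIntegral.integral_nonneg ht fun u _ ↦ segmentMoment.nonneg u

lemma stronglyMeasurable_sum_range (hXmeas : ∀ i < m, Measurable[𝒢 i] (X i)) :
    StronglyMeasurable[𝒢 m] (∑ i ∈ range m, X i) :=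
  Finset.stronglyMeasurable_sum _ fun i hi ↦
    have him := mem_range.1 hi
    ((hXmeas i him).mono (𝒢.mono him.le) le_rfl).stronglyMeasurable

lemma condExpSumNorm_eq_toReal_eLpNorm {j k : ℕ} (hXj : AEStronglyMeasurable (X j) P)
    (hX : ∀ i ∈ Ico j k, Integrable (X i) P) :
    condExpSumNorm P 𝒢 X p j k =
      (eLpNorm (fun ω ↦ X j ω * ∑ i ∈ Ico j k, (P[X i|𝒢 j]) ω) (ENNReal.ofReal p) P).toReal := by
  have hsum := condExp_finsetSum hX (𝒢 j)
  rw [condExpSumNorm, ← toReal_eLpNorm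
    (hXj.mul (stronglyMeasurable_condExp.mono (𝒢.le j)).aestronglyMeasurable)]
  refine congrArg ENNReal.toReal (eLpNorm_congr_ae ?_)
  filter_upwards [hsum] with ω hω
  rw [Pi.mul_apply, hω, Finset.sum_apply]

variable [IsFiniteMeasure P]

lemma integral_mul_condExp_of_stronglyMeasurable {m : MeasurableSpace Ω} (hm : m ≤ mΩ)
    {D R : Ω → ℝ} (hD : StronglyMeasurable[m] D) (hDR : Integrable (D * R) P)
    (hR : Integrable R P) : ∫ ω, D ω * P[R|m] ω ∂P = ∫ ω, D ω * R ω ∂P :=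
  (integral_congr_ae (condExp_mul_of_stronglyMeasurable_left hD hDR hR).symm).trans
    (integral_condExp hm)

lemma integral_signedPow_add_sub_mul_le_of_stronglyMeasurable (hp : 1 ≤ p)
    {m : MeasurableSpace Ω} (hm : m ≤ mΩ)
    (hAm : StronglyMeasurable[m] A) (hYm : StronglyMeasurable[m] Y)
    (hA : MemLp A (ENNReal.ofReal (2 * p)) P) (hY : MemLp Y (ENNReal.ofReal (2 * p)) P)
    (hR : MemLp R (ENNReal.ofReal (2 * p)) P) :
    ∫ ω, (signedPow (2 * p - 2) (A ω + Y ω) - signedPow (2 * p - 2) (A ω)) * R ω ∂P ≤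
      (2 * p - 1) * (lpNorm (Y * P[R|m]) (ENNReal.ofReal p) P *
        ∫ u in (0 : ℝ)..1, segmentMoment P p A Y u) := by
  have hone : 1 ≤ ENNReal.ofReal (2 * p) := ENNReal.one_le_ofReal.2 (by linarith)
  have hsigned := signedPow.continuous (s := 2 * p - 2) (by linarith)
  have hD : StronglyMeasurable[m]
      (fun ω ↦ signedPow (2 * p - 2) (A ω + Y ω) - signedPow (2 * p - 2) (A ω)) :=
    (hsigned.comp_stronglyMeasurable (hAm.add hYm)).sub (hsigned.comp_stronglyMeasurable hAm)
  rw [← integral_mul_condExp_of_stronglyMeasurable hm hD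
    (integrable_signedPow_add_sub_mul hp hA hY hR) (hR.integrable hone)]
  exact integral_signedPow_add_sub_mul_le hp hA hY
    (memLp_mul_of_two_mul (by linarith) hY (hR.condExp hone))

lemma integral_abs_sum_range_add_rpow_le (hp : 1 ≤ p) {Z : Ω → ℝ}
    (hX : ∀ i < m, MemLp (X i) (ENNReal.ofReal (2 * p)) P)
    (hXmeas : ∀ i < m, Measurable[𝒢 i] (X i))
    (hZ : MemLp Z (ENNReal.ofReal (2 * p)) P) :
    ∫ ω, |∑ i ∈ range m, X i ω + Z ω| ^ (2 * p) ∂P ≤ 2 * p * (2 * p - 1) *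
      (∑ j ∈ range m, lpNorm (X j * P[∑ i ∈ Ico j m, X i + Z|𝒢 j]) (ENNReal.ofReal p) P *
        segmentIntegral P p X j 1 +
      lpNorm (Z * Z) (ENNReal.ofReal p) P *
        ∫ u in (0 : ℝ)..1, segmentMoment P p (∑ i ∈ range m, X i) Z u) := by
  have hS (j : ℕ) (hj : j ≤ m) : MemLp (∑ i ∈ range j, X i) (ENNReal.ofReal (2 * p)) P :=
    memLp_finsetSum' _ fun i hi ↦ hX i ((mem_range.1 hi).trans_le hj)
  have hR (j : ℕ) : MemLp (∑ i ∈ Ico j m, X i + Z) (ENNReal.ofReal (2 * p)) P :=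
    (memLp_finsetSum' _ fun i hi ↦ hX i (mem_Ico.1 hi).2).add hZ
  have hint (j : ℕ) (hj : j ∈ range m) :=
    integrable_signedPow_add_sub_mul hp (hS j (mem_range.1 hj).le) (hX j (mem_range.1 hj)) (hR j)
  have hintZ := integrable_signedPow_add_sub_mul hp (hS m le_rfl) hZ hZ
  calc ∫ ω, |∑ i ∈ range m, X i ω + Z ω| ^ (2 * p) ∂P
      ≤ ∫ ω, 2 * p * (∑ j ∈ range m, (signedPow (2 * p - 2) ((∑ i ∈ range j, X i) ω + X j ω) -
            signedPow (2 * p - 2) ((∑ i ∈ range j, X i) ω)) * (∑ i ∈ Ico j m, X i + Z) ω +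
          (signedPow (2 * p - 2) ((∑ i ∈ range m, X i) ω + Z ω) -
            signedPow (2 * p - 2) ((∑ i ∈ range m, X i) ω)) * Z ω) ∂P := by
        refine integral_mono_of_nonneg (.of_forall fun ω ↦ by positivity)
          (((integrable_finsetSum _ hint).add hintZ).const_mul _) (.of_forall fun ω ↦ ?_)
        simpa only [sub_add_cancel, Finset.sum_apply, Pi.add_apply] using
          abs_sum_range_add_rpow_le (by linarith : 0 ≤ 2 * p - 2) (fun i ↦ X i ω) m (Z ω)
    _ ≤ 2 * p * (∑ j ∈ range m, (2 * p - 1) *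
          (lpNorm (X j * P[∑ i ∈ Ico j m, X i + Z|𝒢 j]) (ENNReal.ofReal p) P *
            segmentIntegral P p X j 1) + (2 * p - 1) * (lpNorm (Z * Z) (ENNReal.ofReal p) P *
          ∫ u in (0 : ℝ)..1, segmentMoment P p (∑ i ∈ range m, X i) Z u)) := by
        rw [integral_const_mul, integral_add (integrable_finsetSum _ hint) hintZ,
          integral_finsetSum _ hint]
        gcongr with j hj
        · have hj := mem_range.1 hj
          exact integral_signedPow_add_sub_mul_le_of_stronglyMeasurable hp (𝒢.le j)
            (stronglyMeasurable_sum_range fun i hi ↦ hXmeas i (hi.trans hj))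
            (hXmeas j hj).stronglyMeasurable (hS j hj.le) (hX j hj) (hR j)
        · exact integral_signedPow_add_sub_mul_le hp (hS m le_rfl) hZ
            (memLp_mul_of_two_mul (by linarith) hZ hZ)
    _ = _ := by
        rw [← mul_sum]
        ring

lemma lpNorm_mul_condExp_add_le (hp : 1 ≤ p) {c d : ℝ} (hc : 0 ≤ c) (hd : 0 ≤ d)
    {m : MeasurableSpace Ω} {R' : Ω → ℝ} (hY : MemLp Y (ENNReal.ofReal (2 * p)) P)
    (hR : MemLp R (ENNReal.ofReal (2 * p)) P) (hR' : MemLp R' (ENNReal.ofReal (2 * p)) P) :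
    lpNorm (Y * P[c • R + d • R'|m]) (ENNReal.ofReal p) P ≤
      c * lpNorm (Y * P[R|m]) (ENNReal.ofReal p) P +
        d * lpNorm (Y * P[R'|m]) (ENNReal.ofReal p) P := by
  have hone : 1 ≤ ENNReal.ofReal (2 * p) := ENNReal.one_le_ofReal.2 (by linarith)
  have hlinear : Y * P[c • R + d • R'|m] =ᵐ[P] c • (Y * P[R|m]) + d • (Y * P[R'|m]) := by
    filter_upwards [condExp_add ((hR.integrable hone).smul c) ((hR'.integrable hone).smul d) m,
      condExp_smul c R m, condExp_smul d R' m] with ω hadd hsmul hsmul'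
    simp only [Pi.mul_apply, Pi.add_apply, Pi.smul_apply, smul_eq_mul] at hadd hsmul hsmul' ⊢
    rw [hadd, hsmul, hsmul']
    ring
  have hYR := memLp_mul_of_two_mul (by linarith) hY (hR.condExp (m := m) hone)
  calc lpNorm (Y * P[c • R + d • R'|m]) (ENNReal.ofReal p) P
      = lpNorm (c • (Y * P[R|m]) + d • (Y * P[R'|m])) (ENNReal.ofReal p) P :=
        lpNorm_congr_ae hlinear
    _ ≤ _ := lpNorm_add_le (hYR.const_smul c) (ENNReal.one_le_ofReal.2 hp)
    _ = _ := by simp only [lpNorm_const_smul, coe_nnnorm, Real.norm_of_nonneg hc,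
        Real.norm_of_nonneg hd]

lemma lpNorm_mul_condExp_sum_Ico_add_smul_le (hp : 1 ≤ p) {j : ℕ} (hjm : j ≤ m)
    (hX : ∀ i < m + 1, MemLp (X i) (ENNReal.ofReal (2 * p)) P) {t : ℝ}
    (ht : t ∈ Set.Icc (0 : ℝ) 1) :
    lpNorm (X j * P[∑ i ∈ Ico j m, X i + t • X m|𝒢 j]) (ENNReal.ofReal p) P ≤
      (1 - t) * condExpSumNorm P 𝒢 X p j m + t * condExpSumNorm P 𝒢 X p j (m + 1) := by
  have hsum (k : ℕ) (hk : k ≤ m + 1) : MemLp (∑ i ∈ Ico j k, X i) (ENNReal.ofReal (2 * p)) P :=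
    memLp_finsetSum' _ fun i hi ↦ hX i ((mem_Ico.1 hi).2.trans_le hk)
  have hcomb : ∑ i ∈ Ico j m, X i + t • X m =
      (1 - t) • ∑ i ∈ Ico j m, X i + t • ∑ i ∈ Ico j (m + 1), X i := by
    rw [sum_Ico_succ_top hjm]
    module
  rw [hcomb]
  exact lpNorm_mul_condExp_add_le hp (sub_nonneg.2 ht.2) ht.1 (hX j (by lia))
    (hsum m (by lia)) (hsum (m + 1) le_rfl)

lemma condExpSumNorm_succ_self (hX : Integrable (X m) P) (hXmeas : Measurable[𝒢 m] (X m)) :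
    condExpSumNorm P 𝒢 X p m (m + 1) = lpNorm (X m * X m) (ENNReal.ofReal p) P := by
  rw [condExpSumNorm, Nat.Ico_succ_singleton, sum_singleton,
    condExp_of_stronglyMeasurable (𝒢.le m) hXmeas.stronglyMeasurable hX]

lemma integral_abs_sum_range_add_smul_rpow_le (hp : 1 ≤ p)
    (hX : ∀ i < m + 1, MemLp (X i) (ENNReal.ofReal (2 * p)) P)
    (hXmeas : ∀ i < m + 1, Measurable[𝒢 i] (X i)) {b : ℕ → ℝ}
    (hb : ∀ j k, j < k → k ≤ m + 1 → condExpSumNorm P 𝒢 X p j k ≤ b j) {t : ℝ}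
    (ht : t ∈ Set.Icc (0 : ℝ) 1) :
    ∫ ω, |∑ i ∈ range m, X i ω + t * X m ω| ^ (2 * p) ∂P ≤ 2 * p * (2 * p - 1) *
      (∑ j ∈ range m, b j * segmentIntegral P p X j 1 + b m * segmentIntegral P p X m t) := by
  have hXm := hX m m.lt_succ_self
  have hlast : lpNorm (X m * X m) (ENNReal.ofReal p) P ≤ b m := by
    rw [← condExpSumNorm_succ_self
      (hXm.integrable (ENNReal.one_le_ofReal.2 (by linarith))) (hXmeas m m.lt_succ_self)]
    exact hb m (m + 1) m.lt_succ_self le_rfl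
  have hprev (j : ℕ) (hj : j < m) :
      lpNorm (X j * P[∑ i ∈ Ico j m, X i + t • X m|𝒢 j]) (ENNReal.ofReal p) P ≤ b j := by
    refine (lpNorm_mul_condExp_sum_Ico_add_smul_le hp hj.le hX ht).trans ?_
    calc (1 - t) * condExpSumNorm P 𝒢 X p j m + t * condExpSumNorm P 𝒢 X p j (m + 1)
        ≤ (1 - t) * b j + t * b j :=
          add_le_add (mul_le_mul_of_nonneg_left (hb j m hj (by lia)) (sub_nonneg.2 ht.2))
            (mul_le_mul_of_nonneg_left (hb j (m + 1) (by lia) le_rfl) ht.1)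
      _ = b j := by ring
  refine (integral_abs_sum_range_add_rpow_le hp (fun i hi ↦ hX i (by lia))
    (fun i hi ↦ hXmeas i (by lia)) (hXm.const_smul t)).trans ?_
  refine mul_le_mul_of_nonneg_left (add_le_add (sum_le_sum fun j hj ↦ ?_) ?_)
    (mul_nonneg (by linarith) (by linarith))
  · exact mul_le_mul_of_nonneg_right (hprev j (mem_range.1 hj))
      (segmentIntegral_nonneg zero_le_one)
  · exact (lpNorm_smul_mul_self_mul_integral_segmentMoment_le ht).trans
      (mul_le_mul_of_nonneg_right hlast (segmentIntegral_nonneg ht.1))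

lemma sum_mul_segmentIntegral_succ_rpow_le (hp : 1 ≤ p)
    (hX : ∀ i < m + 1, MemLp (X i) (ENNReal.ofReal (2 * p)) P)
    (hXmeas : ∀ i < m + 1, Measurable[𝒢 i] (X i)) {b : ℕ → ℝ}
    (hb : ∀ j k, j < k → k ≤ m + 1 → condExpSumNorm P 𝒢 X p j k ≤ b j) :
    (2 * p * (2 * p - 1) * ∑ j ∈ range (m + 1), b j * segmentIntegral P p X j 1) ^ (1 / p) ≤
      (2 * p * (2 * p - 1) * ∑ j ∈ range m, b j * segmentIntegral P p X j 1) ^ (1 / p) +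
        2 * (2 * p - 1) * b m := by
  set K := 2 * p * (2 * p - 1) with hK
  have hK0 : 0 ≤ K := mul_nonneg (by linarith) (by linarith)
  have hb0 (j : ℕ) (hj : j < m + 1) : 0 ≤ b j :=
    lpNorm_nonneg.trans (hb j (j + 1) j.lt_succ_self hj)
  have hS : MemLp (∑ i ∈ range m, X i) (ENNReal.ofReal (2 * p)) P :=
    memLp_finsetSum' _ fun i hi ↦ hX i ((mem_range.1 hi).trans m.lt_succ_self)
  have hXm := hX m m.lt_succ_self
  have hC : 0 ≤ K * ∑ j ∈ range m, b j * segmentIntegral P p X j 1 :=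
    mul_nonneg hK0 (sum_nonneg fun j hj ↦ mul_nonneg
      (hb0 j ((mem_range.1 hj).trans m.lt_succ_self)) (segmentIntegral_nonneg zero_le_one))
  have hexp : 0 ≤ 1 - 1 / p := sub_nonneg.2 ((div_le_one (by linarith)).2 hp)
  have hmoment (t : ℝ) (ht : t ∈ Set.Icc (0 : ℝ) 1) :
      segmentMoment P p (∑ i ∈ range m, X i) (X m) t ≤
        (K * ∑ j ∈ range m, b j * segmentIntegral P p X j 1 +
          K * b m * segmentIntegral P p X m t) ^ (1 - 1 / p) := by
    rw [segmentMoment.eq_integral_rpow hp hS.1 hXm.1, mul_assoc K, ← mul_add]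
    simp only [Finset.sum_apply]
    gcongr
    exact integral_abs_sum_range_add_smul_rpow_le hp hX hXmeas hb ht
  have hgronwall := rpow_one_sub_le_of_le_integral_rpow
    (segmentMoment.continuous hp hS hXm) segmentMoment.nonneg hC
    (mul_nonneg hK0 (hb0 m m.lt_succ_self)) zero_le_one hexp
    (sub_le_self 1 (by positivity)) hmoment
  calc (K * ∑ j ∈ range (m + 1), b j * segmentIntegral P p X j 1) ^ (1 / p)
      = (K * ∑ j ∈ range m, b j * segmentIntegral P p X j 1 +
          K * b m * segmentIntegral P p X m 1) ^ (1 - (1 - 1 / p)) := by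
        rw [sum_range_succ, mul_add, mul_assoc K, sub_sub_cancel]
    _ ≤ _ := hgronwall
    _ = _ := by
        rw [sub_sub_cancel, hK]
        field_simp

lemma sum_mul_segmentIntegral_rpow_le (hp : 1 ≤ p)
    (hX : ∀ i < m, MemLp (X i) (ENNReal.ofReal (2 * p)) P)
    (hXmeas : ∀ i < m, Measurable[𝒢 i] (X i)) {b : ℕ → ℝ}
    (hb : ∀ j k, j < k → k ≤ m → condExpSumNorm P 𝒢 X p j k ≤ b j) :
    (2 * p * (2 * p - 1) * ∑ j ∈ range m, b j * segmentIntegral P p X j 1) ^ (1 / p) ≤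
      2 * (2 * p - 1) * ∑ j ∈ range m, b j := by
  induction m with
  | zero => simp [Real.zero_rpow (inv_ne_zero (zero_lt_one.trans_le hp).ne')]
  | succ m ih =>
    have hprev := ih (fun i hi ↦ hX i (by lia)) (fun i hi ↦ hXmeas i (by lia))
      fun j k hjk hk ↦ hb j k hjk (by lia)
    rw [sum_range_succ b, mul_add]
    exact (sum_mul_segmentIntegral_succ_rpow_le hp hX hXmeas hb).trans
      (add_le_add_left hprev _)

theorem integral_abs_sum_range_rpow_le (hp : 1 ≤ p)
    (hX : ∀ i < m, MemLp (X i) (ENNReal.ofReal (2 * p)) P)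
    (hXmeas : ∀ i < m, Measurable[𝒢 i] (X i)) {b : ℕ → ℝ}
    (hb : ∀ j k, j < k → k ≤ m → condExpSumNorm P 𝒢 X p j k ≤ b j) :
    ∫ ω, |∑ i ∈ range m, X i ω| ^ (2 * p) ∂P ≤ (2 * (2 * p - 1) * ∑ j ∈ range m, b j) ^ p := by
  have hp0 : 0 < p := by linarith
  obtain _ | m := m
  · simp [Real.zero_rpow hp0.ne', Real.zero_rpow (mul_pos two_pos hp0).ne']
  have hmoment := integral_abs_sum_range_add_smul_rpow_le hp hX hXmeas hb
    (Set.right_mem_Icc.2 zero_le_one)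
  simp only [one_mul, ← sum_range_succ] at hmoment
  have hnonneg : 0 ≤ 2 * p * (2 * p - 1) *
      ∑ j ∈ range (m + 1), b j * segmentIntegral P p X j 1 :=
    (integral_nonneg fun ω ↦ by positivity).trans hmoment
  calc ∫ ω, |∑ i ∈ range (m + 1), X i ω| ^ (2 * p) ∂P
      ≤ ((2 * p * (2 * p - 1) *
          ∑ j ∈ range (m + 1), b j * segmentIntegral P p X j 1) ^ (1 / p)) ^ p := by
        rwa [one_div, Real.rpow_inv_rpow hnonneg hp0.ne']
    _ ≤ _ := Real.rpow_le_rpow (by positivity) (sum_mul_segmentIntegral_rpow_le hp hX hXmeas hb)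
        hp0.le

end Filtration

lemma sum_Icc_add_one_eq_sum_Ico {M : Type*} [AddCommMonoid M] (f : ℕ → M) (j k : ℕ) :
    ∑ i ∈ Finset.Icc (j + 1) k, f i = ∑ i ∈ Finset.Ico j k, f (i + 1) := by
  rw [← Finset.Ico_add_one_right_eq_Icc, Finset.sum_Ico_add']

theorem rio_inequality_general {Ω : Type*} {mΩ : MeasurableSpace Ω}
    (P : Measure Ω) [IsFiniteMeasure P]
    (𝒢 : Filtration ℕ mΩ) (p : ℝ) (hp : 1 ≤ p) (n : ℕ) (X : ℕ → Ω → ℝ)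
    (hXLp : ∀ i ∈ Finset.Icc 1 n, MemLp (X i) (ENNReal.ofReal (2 * p)) P)
    (hXmeas : ∀ i ∈ Finset.Icc 1 n, Measurable[𝒢 i] (X i)) :
    (∫ ω, |∑ i ∈ Finset.Icc 1 n, X i ω| ^ (2 * p) ∂P) ≤
      (2 * (2 * p - 1) * ∑ i ∈ Finset.Icc 1 n,
        ⨆ k : Set.Icc i n,
          (eLpNorm (fun ω => X i ω * ∑ j ∈ Finset.Icc i (k : ℕ), (P[X j|𝒢 i]) ω)
            (ENNReal.ofReal p) P).toReal) ^ p := by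
  let 𝒢' : Filtration ℕ mΩ := ⟨fun i ↦ 𝒢 (i + 1), fun _ _ h ↦ 𝒢.mono (by lia), fun i ↦ 𝒢.le _⟩
  have hmem {i : ℕ} (hi : i < n) : i + 1 ∈ Finset.Icc 1 n :=
    Finset.mem_Icc.2 ⟨by lia, hi⟩
  have hint {i : ℕ} (hi : i < n) : Integrable (X (i + 1)) P :=
    (hXLp _ (hmem hi)).integrable (ENNReal.one_le_ofReal.2 (by linarith))
  simp only [sum_Icc_add_one_eq_sum_Ico _ 0, ← Finset.range_eq_Ico]
  refine integral_abs_sum_range_rpow_le (𝒢 := 𝒢') (X := fun i ↦ X (i + 1)) hp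
    (fun i hi ↦ hXLp _ (hmem hi)) (fun i hi ↦ hXmeas _ (hmem hi)) fun j k hjk hkn ↦ ?_
  rw [condExpSumNorm_eq_toReal_eLpNorm (X := fun i ↦ X (i + 1))
    (hint (by lia)).aestronglyMeasurable fun i hi ↦ hint ((Finset.mem_Ico.1 hi).2.trans_le hkn)]
  refine le_ciSup_of_le (Set.finite_range _).bddAbove (⟨k, hjk, hkn⟩ : Set.Icc (j + 1) n) ?_
  simp only [sum_Icc_add_one_eq_sum_Ico]
  exact le_rfl

/-- Rio's inequality. Let `(Ω, ℱ, P)` be a probability space, `(𝒢_i)` a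
filtration, `p ≥ 1`, and `X₁, …, X_n` centered random variables in `L^{2p}` with `X_i`
measurable with respect to `𝒢_i`. With
`b_{i,n} = max_{i ≤ k ≤ n} ‖X_i Σ_{j=i}^k E(X_j | 𝒢_i)‖_p`, one has
`E|X₁ + ⋯ + X_n|^{2p} ≤ (4p Σ_{i=1}^n b_{i,n})^p`. -/
theorem rio_inequality {Ω : Type*} {mΩ : MeasurableSpace Ω}
    (P : Measure Ω) [IsProbabilityMeasure P]
    (𝒢 : Filtration ℕ mΩ) (p : ℝ) (hp : 1 ≤ p) (n : ℕ) (X : ℕ → Ω → ℝ)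
    (hXLp : ∀ i ∈ Finset.Icc 1 n, MemLp (X i) (ENNReal.ofReal (2 * p)) P)
    (hX0 : ∀ i ∈ Finset.Icc 1 n, ∫ ω, X i ω ∂P = 0)
    (hXmeas : ∀ i ∈ Finset.Icc 1 n, Measurable[𝒢 i] (X i)) :
    (∫ ω, |∑ i ∈ Finset.Icc 1 n, X i ω| ^ (2 * p) ∂P) ≤
      (4 * p * ∑ i ∈ Finset.Icc 1 n,
        ⨆ k : Set.Icc i n,
          (eLpNorm (fun ω => X i ω * ∑ j ∈ Finset.Icc i (k : ℕ), (P[X j|𝒢 i]) ω)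
            (ENNReal.ofReal p) P).toReal) ^ p := by
  refine (rio_inequality_general P 𝒢 p hp n X hXLp hXmeas).trans <| Real.rpow_le_rpow
    (mul_nonneg (by linarith) ?_) (mul_le_mul_of_nonneg_right (by linarith) ?_) (by linarith) <;>
  exact Finset.sum_nonneg fun _ _ ↦ Real.iSup_nonneg fun _ ↦ ENNReal.toReal_nonneg
end
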